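/- Let C be an oriented closed immersed curve in ℝ² with only transverse double-point self-intersections and with index 1 − 2g for some g ≥ 1. Then the total number of self-intersections of C is at least 2g − 2. -/

import Mathlib

open scoped Manifold Topology
open Set

noncomputable section

/-- The determinant (cross product) of two vectors of the plane `ℝ² ≅ ℂ`:
`cross v w > 0` means that `(v, w)` is a positively oriented pair (for the
standard orientation of the plane). Two vectors are linearly independent
iff their cross product is nonzero. -/
def cross (v w : ℂ) : ℝ := v.re * w.im - v.im * w.re

/-- A closed immersed curve in the plane `ℝ² ≅ ℂ`: a smooth `1`-periodic map
`ℝ → ℂ` (i.e. a smooth map on the circle `ℝ/ℤ`) with nowhere vanishing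
derivative. -/
structure ImmersedLoop where
  toFun : ℝ → ℂ
  smooth : ContDiff ℝ (⊤ : ℕ∞) toFun
  periodic : Function.Periodic toFun 1
  deriv_ne_zero : ∀ t : ℝ, deriv toFun t ≠ 0

namespace ImmersedLoop

/-- A self-intersection of the immersed loop: a point of the plane having at
least two preimages on the circle `ℝ/ℤ` (represented by `[0,1)`). -/
def SelfIntersection (γ : ImmersedLoop) (q : ℂ) : Prop :=
  ∃ s t : ℝ, s ∈ Set.Ico (0 : ℝ) 1 ∧ t ∈ Set.Ico (0 : ℝ) 1 ∧ s ≠ t ∧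
    γ.toFun s = q ∧ γ.toFun t = q

/-- A transverse double point: a point of the plane with exactly two preimages
on the circle, at which the two tangent vectors are linearly independent
(the two arcs cross transversely). -/
def IsTransverseDoublePoint (γ : ImmersedLoop) (q : ℂ) : Prop :=
  ∃ s t : ℝ, s ∈ Set.Ico (0 : ℝ) 1 ∧ t ∈ Set.Ico (0 : ℝ) 1 ∧ s ≠ t ∧
    γ.toFun s = q ∧ γ.toFun t = q ∧
    (∀ u ∈ Set.Ico (0 : ℝ) 1, γ.toFun u = q → u = s ∨ u = t) ∧
    cross (deriv γ.toFun s) (deriv γ.toFun t) ≠ 0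

/-- The loop intersects itself transversely: every self-intersection is a
transverse double point. -/
def Generic (γ : ImmersedLoop) : Prop :=
  ∀ q : ℂ, γ.SelfIntersection q → γ.IsTransverseDoublePoint q

/-- `γ.IndexIs n` means that the index (turning number) of the immersed loop
`γ` is `n`: the winding number around the origin of the nowhere-vanishing
derivative `γ' : ℝ/ℤ → ℂ \ {0}`, expressed via a continuous lift `θ` of the
angular part of `γ'`. -/
def IndexIs (γ : ImmersedLoop) (n : ℤ) : Prop :=
  ∃ θ : ℝ → ℝ, Continuous θ ∧
    (∀ t : ℝ, deriv γ.toFun t =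
      (‖deriv γ.toFun t‖ : ℂ) * Complex.exp ((θ t : ℂ) * Complex.I)) ∧
    θ 1 - θ 0 = 2 * Real.pi * (n : ℝ)

end ImmersedLoop

/-!
For a `T`-periodic plane curve `c`, the secants `c t - c s`, suitably rescaled, extend continuously
to the triangle `a ≤ s ≤ t ≤ a + T`, with values `deriv c s` on its hypotenuse `s = t`. The zeros of
this extension are the double points of `c`. They are regular if `c` crosses itself transversely, so
each of them contributes at most one turn to the winding along the boundary of the triangle.
If `Re c` is minimal at `a`, the extension takes values in the right half plane on the leg `s = a`
and in the left half plane on the leg `t = a + T`, so the two legs account for at most one turn.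
The winding along the hypotenuse is the index `n` of `c`, hence `c` has at least `|n| - 1` double
points.
-/

section ArgVariation

variable {E E' : Type*} [NormedAddCommGroup E] [NormedSpace ℝ E]
  [NormedAddCommGroup E'] [NormedSpace ℝ E'] {F G : E → ℂ} {x y z : E} {v w : ℝ}

/-- The argument of `F` varies continuously by `v` along the segment from `x` to `y`, on which `F`
does not vanish. The branch `φ` of the argument is only required to be continuous on the segment. -/
def HasArgVariation (F : E → ℂ) (x y : E) (v : ℝ) : Prop :=
  ∃ φ : E → ℝ, ContinuousOn φ (segment ℝ x y) ∧
    (∀ z ∈ segment ℝ x y, F z ≠ 0 ∧ (φ z : Real.Angle) = (F z).arg) ∧ φ y - φ x = v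

namespace HasArgVariation

theorem ne_zero (h : HasArgVariation F x y v) (hz : z ∈ segment ℝ x y) : F z ≠ 0 := by
  obtain ⟨φ, -, hφ, -⟩ := h
  exact (hφ z hz).1

theorem congr (h : HasArgVariation F x y v) (hFG : EqOn G F (segment ℝ x y)) :
    HasArgVariation G x y v := by
  obtain ⟨φ, hφc, hφ, hv⟩ := h
  exact ⟨φ, hφc, fun z hz ↦ by simpa only [hFG hz] using hφ z hz, hv⟩

theorem coe_eq (h : HasArgVariation F x y v) : (v : Real.Angle) = (F y).arg - (F x).arg := by
  obtain ⟨φ, -, hφ, rfl⟩ := h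
  rw [Real.Angle.coe_sub, (hφ y (right_mem_segment ℝ x y)).2, (hφ x (left_mem_segment ℝ x y)).2]

theorem unique (h : HasArgVariation F x y v) (h' : HasArgVariation F x y w) : v = w := by
  obtain ⟨φ, hφc, hφ, rfl⟩ := h
  obtain ⟨ψ, hψc, hψ, rfl⟩ := h'
  have hx := left_mem_segment ℝ x y
  have hlift : EqOn φ (fun z ↦ ψ z + (φ x - ψ x)) (segment ℝ x y) :=
    (AddCircle.isCoveringMap_coe (2 * Real.pi)).eqOn_of_comp_eqOn
      (convex_segment x y).isPreconnected hφc (hψc.add continuousOn_const)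
      (fun z hz ↦ ?_) hx (by ring)
  · linarith [hlift (right_mem_segment ℝ x y)]
  · change (φ z : Real.Angle) = ((ψ z + (φ x - ψ x) : ℝ) : Real.Angle)
    rw [Real.Angle.coe_add, Real.Angle.coe_sub, (hφ x hx).2, (hψ x hx).2, sub_self, add_zero,
      (hφ z hz).2, (hψ z hz).2]

theorem div (hF : HasArgVariation F x y v) (hG : HasArgVariation G x y w) :
    HasArgVariation (fun z ↦ F z / G z) x y (v - w) := by
  obtain ⟨φ, hφc, hφ, rfl⟩ := hF
  obtain ⟨ψ, hψc, hψ, rfl⟩ := hG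
  refine ⟨fun z ↦ φ z - ψ z, hφc.sub hψc, fun z hz ↦ ?_, by ring⟩
  obtain ⟨hF0, hFarg⟩ := hφ z hz
  obtain ⟨hG0, hGarg⟩ := hψ z hz
  exact ⟨div_ne_zero hF0 hG0, by
    rw [Real.Angle.coe_sub, hFarg, hGarg, Complex.arg_div_coe_angle hF0 hG0]⟩

theorem const_mul (hF : HasArgVariation F x y v) {k : ℂ} (hk : k ≠ 0) :
    HasArgVariation (fun z ↦ k * F z) x y v := by
  obtain ⟨φ, hφc, hφ, rfl⟩ := hF
  refine ⟨fun z ↦ k.arg + φ z, continuousOn_const.add hφc, fun z hz ↦ ?_, by ring⟩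
  obtain ⟨hF0, hFarg⟩ := hφ z hz
  exact ⟨mul_ne_zero hk hF0, by
    rw [Real.Angle.coe_add, hFarg, Complex.arg_mul_coe_angle hk hF0]⟩

theorem comp_affineMap {F : E' → ℂ} (g : E →ᴬ[ℝ] E') (h : HasArgVariation F (g x) (g y) v) :
    HasArgVariation (F ∘ g) x y v := by
  obtain ⟨φ, hφc, hφ, hv⟩ := h
  have hg : MapsTo g (segment ℝ x y) (segment ℝ (g x) (g y)) :=
    mapsTo_iff_image_subset.2 (image_segment ℝ g.toAffineMap x y).subset
  exact ⟨φ ∘ g, hφc.comp g.continuous.continuousOn hg, fun z hz ↦ hφ _ (hg hz), hv⟩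

theorem of_mem_slitPlane (hF : ContinuousOn F (segment ℝ x y))
    (h : MapsTo F (segment ℝ x y) Complex.slitPlane) :
    HasArgVariation F x y ((F y).arg - (F x).arg) :=
  ⟨fun z ↦ (F z).arg, Complex.continuousOn_arg.comp hF h,
    fun _ hz ↦ ⟨Complex.slitPlane_ne_zero (h hz), rfl⟩, rfl⟩

theorem of_re_nonneg (hF : ContinuousOn F (segment ℝ x y))
    (h : ∀ z ∈ segment ℝ x y, F z ≠ 0 ∧ 0 ≤ (F z).re) :
    ∃ v, |v| ≤ Real.pi ∧ HasArgVariation F x y v := by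
  have hslit : MapsTo F (segment ℝ x y) Complex.slitPlane := fun z hz ↦
    Complex.mem_slitPlane_iff_arg.2
      ⟨fun harg ↦ by
        have := Complex.abs_arg_le_pi_div_two_iff.2 (h z hz).2
        rw [harg, abs_of_pos Real.pi_pos] at this
        linarith [Real.pi_pos], (h z hz).1⟩
  refine ⟨_, ?_, of_mem_slitPlane hF hslit⟩
  have hx := Complex.abs_arg_le_pi_div_two_iff.2 (h x (left_mem_segment ℝ x y)).2
  have hy := Complex.abs_arg_le_pi_div_two_iff.2 (h y (right_mem_segment ℝ x y)).2
  linarith [abs_sub (F y).arg (F x).arg]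

end HasArgVariation

theorem div_mem_slitPlane_of_zero_notMem_segment {z w : ℂ} (h : 0 ∉ segment ℝ z w) :
    w / z ∈ Complex.slitPlane := by
  have hz : z ≠ 0 := fun hz ↦ h (hz ▸ left_mem_segment ℝ z w)
  rw [Complex.mem_slitPlane_iff_not_le_zero]
  intro hle
  obtain ⟨r, hr, hrw⟩ : ∃ r : ℝ, 0 ≤ r ∧ w = r • -z := by
    obtain ⟨hre, him⟩ := Complex.le_def.1 hle
    refine ⟨-(w / z).re, neg_nonneg.2 hre, ?_⟩
    have hreal : w / z = ((w / z).re : ℂ) := Complex.ext rfl him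
    rw [neg_smul_neg, Complex.real_smul, ← hreal, div_mul_cancel₀ w hz]
  rw [mem_segment_iff_sameRay, zero_sub, sub_zero, hrw] at h
  exact h (SameRay.sameRay_nonneg_smul_right (-z) hr)

theorem exists_hasArgVariation_affine (g : E →ᴬ[ℝ] ℂ)
    (hg : ∀ z ∈ segment ℝ x y, g z ≠ 0) : ∃ v, |v| < Real.pi ∧ HasArgVariation g x y v := by
  have hslit : ∀ z ∈ segment ℝ x y, g z / g x ∈ Complex.slitPlane := fun z hz ↦ by
    refine div_mem_slitPlane_of_zero_notMem_segment fun h0 ↦ ?_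
    obtain ⟨q, hq, hq0⟩ := (image_segment ℝ g.toAffineMap x z).ge h0
    exact hg q ((convex_segment x y).segment_subset (left_mem_segment ℝ x y) hz hq) hq0
  have hx := hg x (left_mem_segment ℝ x y)
  have hv := (HasArgVariation.of_mem_slitPlane
    (g.continuous.continuousOn.div_const (g x)) hslit).const_mul hx
  refine ⟨_, ?_, hv.congr fun z _ ↦ (mul_div_cancel₀ _ hx).symm⟩
  rw [div_self hx, Complex.arg_one, sub_zero]
  exact abs_lt.2 ⟨Complex.neg_pi_lt_arg _, (Complex.arg_le_pi _).lt_of_ne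
    (Complex.mem_slitPlane_iff_arg.1 (hslit y (right_mem_segment ℝ x y))).1⟩

theorem exists_continuousOn_arg {S : Set E} (hS : Convex ℝ S) (hF : ContinuousOn F S)
    (hF0 : ∀ z ∈ S, F z ≠ 0) :
    ∃ φ : E → ℝ, ContinuousOn φ S ∧ ∀ z ∈ S, (φ z : Real.Angle) = (F z).arg := by
  rcases S.eq_empty_or_nonempty with rfl | hne
  · exact ⟨0, continuousOn_empty _, by simp⟩
  have := hS.contractibleSpace hne
  have := hS.locallyPathConnectedSpace
  obtain ⟨p, hp⟩ := hne
  let Θ : C(S, Real.Angle) := ⟨fun z ↦ ((F z).arg : Real.Angle), continuous_iff_continuousAt.2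
    fun z ↦ (Complex.continuousAt_arg_coe_angle (hF0 z z.2)).comp (f := S.domRestrict F)
      (continuousOn_iff_continuous_domRestrict.1 hF).continuousAt⟩
  obtain ⟨ψ, ⟨-, hψ⟩, -⟩ :=
    (AddCircle.isCoveringMap_coe (2 * Real.pi)).existsUnique_continuousMap_lifts Θ ⟨p, hp⟩
      (F p).arg rfl
  refine ⟨Function.extend Subtype.val ψ 0, ?_, fun z hz ↦ ?_⟩
  · rw [continuousOn_iff_continuous_domRestrict]
    convert ψ.continuous using 1
    ext z
    exact Subtype.val_injective.extend_apply ψ 0 z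
  · rw [Subtype.val_injective.extend_apply ψ 0 ⟨z, hz⟩]
    exact congrFun hψ ⟨z, hz⟩

end ArgVariation

section ArgumentPrinciple

open Filter Asymptotics

variable {E : Type*} [NormedAddCommGroup E] [NormedSpace ℝ E] {F G : E → ℂ} {p A B C : E}
  {a b c : ℝ}

/-- `p` is a regular zero of `F : E → ℂ`, where `E` is a real plane: `F` vanishes at `p`, and its
real derivative there is invertible. This is encoded as asymptotic equivalence of `F` near `p` with
an invertible linear map centred at `p`. -/
def HasRegularZeroAt (F : E → ℂ) (p : E) : Prop :=
  ∃ L : E ≃L[ℝ] ℂ, F ~[𝓝 p] fun q ↦ L (q - p)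

namespace HasRegularZeroAt

theorem of_hasFDerivAt {L : E ≃L[ℝ] ℂ} (hF : HasFDerivAt F (L : E →L[ℝ] ℂ) p) (h0 : F p = 0) :
    HasRegularZeroAt F p := by
  refine ⟨L, (hF.isLittleO.congr_left fun q ↦ ?_).trans_isBigO (L.isBigO_sub_rev (𝓝 p) p)⟩
  simp only [h0, sub_zero, ContinuousLinearEquiv.coe_coe, Pi.sub_apply]

theorem eq_zero (h : HasRegularZeroAt F p) : F p = 0 := by
  obtain ⟨L, hL⟩ := h
  have hL0 := hL.isBigO.eq_zero_imp.self_of_nhds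
  simpa only [sub_self, map_zero, true_imp_iff] using hL0

theorem congr (h : HasRegularZeroAt F p) (hFG : F =ᶠ[𝓝 p] G) : HasRegularZeroAt G p := by
  obtain ⟨L, hL⟩ := h
  exact ⟨L, hL.congr_left hFG⟩

theorem mul (h : HasRegularZeroAt F p) (hG : ContinuousAt G p) (hG0 : G p ≠ 0) :
    HasRegularZeroAt (fun q ↦ G q * F q) p := by
  obtain ⟨L, hL⟩ := h
  exact ⟨L.trans (ContinuousLinearEquiv.smulLeft (Units.mk0 (G p) hG0)),
    ((isEquivalent_const_iff_tendsto hG0).2 hG).mul hL⟩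

end HasRegularZeroAt

theorem apply_sub_ne_zero {L : E ≃L[ℝ] ℂ} {q : E} (h : q ≠ p) : L (q - p) ≠ 0 :=
  L.map_ne_zero_iff.2 (sub_ne_zero.2 h)

theorem tendsto_div_of_isEquivalent_sub {L : E ≃L[ℝ] ℂ} (h : F ~[𝓝 p] fun q ↦ L (q - p)) :
    Tendsto (fun q ↦ F q / L (q - p)) (𝓝[≠] p) (𝓝 1) := by
  refine (isEquivalent_iff_tendsto_one ?_).1 (h.mono nhdsWithin_le_nhds)
  filter_upwards [self_mem_nhdsWithin] with q hq
  exact apply_sub_ne_zero hq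

theorem segment_subset_triangle (A B C : E) :
    segment ℝ A B ⊆ convexHull ℝ {A, B, C} ∧ segment ℝ B C ⊆ convexHull ℝ {A, B, C} ∧
      segment ℝ A C ⊆ convexHull ℝ {A, B, C} :=
  ⟨segment_subset_convexHull (by simp) (by simp), segment_subset_convexHull (by simp) (by simp),
    segment_subset_convexHull (by simp) (by simp)⟩

namespace HasArgVariation

theorem add_eq_of_ne_zero (hF : ContinuousOn F (convexHull ℝ {A, B, C}))
    (hF0 : ∀ z ∈ convexHull ℝ {A, B, C}, F z ≠ 0) (hAB : HasArgVariation F A B a)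
    (hBC : HasArgVariation F B C b) (hAC : HasArgVariation F A C c) : a + b = c := by
  obtain ⟨φ, hφc, hφ⟩ := exists_continuousOn_arg (convex_convexHull ℝ _) hF hF0
  have hvar {x y : E} (h : segment ℝ x y ⊆ convexHull ℝ {A, B, C}) :
      HasArgVariation F x y (φ y - φ x) :=
    ⟨φ, hφc.mono h, fun z hz ↦ ⟨hF0 z (h hz), hφ z (h hz)⟩, rfl⟩
  obtain ⟨sAB, sBC, sAC⟩ := segment_subset_triangle A B C
  rw [hAB.unique (hvar sAB), hBC.unique (hvar sBC), hAC.unique (hvar sAC)]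
  ring

theorem exists_add_sub_eq (hAB : HasArgVariation F A B a) (hBC : HasArgVariation F B C b)
    (hAC : HasArgVariation F A C c) : ∃ n : ℤ, a + b - c = 2 * Real.pi * n := by
  refine Real.Angle.angle_eq_iff_two_pi_dvd_sub.1 ?_
  rw [Real.Angle.coe_add, hAB.coe_eq, hBC.coe_eq, hAC.coe_eq]
  abel

end HasArgVariation

theorem exists_hasArgVariation_triangle_affine (g : E →ᴬ[ℝ] ℂ) (hAB : 0 ∉ g '' segment ℝ A B)
    (hBC : 0 ∉ g '' segment ℝ B C) (hAC : 0 ∉ g '' segment ℝ A C) :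
    ∃ a b c, HasArgVariation g A B a ∧ HasArgVariation g B C b ∧ HasArgVariation g A C c ∧
      |a + b - c| ≤ 2 * Real.pi := by
  obtain ⟨a, ha, hAB⟩ := exists_hasArgVariation_affine g fun z hz h ↦ hAB ⟨z, hz, h⟩
  obtain ⟨b, hb, hBC⟩ := exists_hasArgVariation_affine g fun z hz h ↦ hBC ⟨z, hz, h⟩
  obtain ⟨c, hc, hAC⟩ := exists_hasArgVariation_affine g fun z hz h ↦ hAC ⟨z, hz, h⟩
  refine ⟨a, b, c, hAB, hBC, hAC, ?_⟩
  obtain ⟨n, hn⟩ := hAB.exists_add_sub_eq hBC hAC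
  have hlt : |2 * Real.pi * (n : ℝ)| < 2 * Real.pi * 2 := by
    rw [← hn]
    linarith [abs_sub (a + b) c, abs_add_le a b, Real.pi_pos]
  rw [hn, abs_mul, abs_of_pos Real.two_pi_pos] at *
  have hn2 : |n| < 2 := by exact_mod_cast lt_of_mul_lt_mul_left hlt Real.two_pi_pos.le
  exact mul_le_of_le_one_right Real.two_pi_pos.le (by exact_mod_cast Int.lt_add_one_iff.1 hn2)

/-- The quotient of `F` by a linear map centred at `p`, with value `1` at `p`. It removes a regular
zero of `F` at `p`. -/
def divLinearAt (F : E → ℂ) (L : E ≃L[ℝ] ℂ) (p : E) : E → ℂ :=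
  open Classical in Function.update (fun q ↦ F q / L (q - p)) p 1

section divLinearAt

variable {L : E ≃L[ℝ] ℂ} {q : E} {S : Set E}

theorem divLinearAt_self : divLinearAt F L p p = 1 := by
  simp [divLinearAt]

theorem divLinearAt_of_ne (h : q ≠ p) : divLinearAt F L p q = F q / L (q - p) := by
  simp [divLinearAt, h]

theorem divLinearAt_eq_zero_iff : divLinearAt F L p q = 0 ↔ q ≠ p ∧ F q = 0 := by
  rcases eq_or_ne q p with rfl | h
  · simp [divLinearAt_self]
  · simp [divLinearAt_of_ne h, h, sub_eq_zero]

theorem continuousOn_divLinearAt (hF : ContinuousOn F S) (h : F ~[𝓝 p] fun q ↦ L (q - p)) :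
    ContinuousOn (divLinearAt F L p) S := by
  classical
  refine continuousOn_update_iff.2 ⟨?_, fun _ ↦
    (tendsto_div_of_isEquivalent_sub h).mono_left (nhdsWithin_mono p fun z hz ↦ hz.2)⟩
  exact (hF.mono sdiff_subset).div (by fun_prop) fun z hz ↦ apply_sub_ne_zero hz.2

theorem HasRegularZeroAt.divLinearAt (h : HasRegularZeroAt F q) (hqp : q ≠ p) :
    HasRegularZeroAt (divLinearAt F L p) q := by
  have hG : ContinuousAt (fun z ↦ (L (z - p))⁻¹) q :=
    ContinuousAt.inv₀ (by fun_prop) (apply_sub_ne_zero hqp)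
  refine (h.mul hG (inv_ne_zero (apply_sub_ne_zero hqp))).congr ?_
  filter_upwards [eventually_ne_nhds hqp] with z hz
  rw [divLinearAt_of_ne hz, div_eq_inv_mul]

theorem HasArgVariation.divLinearAt {x y : E} {v w : ℝ} (hF : HasArgVariation F x y v)
    (hL : HasArgVariation (fun q ↦ L (q - p)) x y w) :
    HasArgVariation (divLinearAt F L p) x y (v - w) :=
  (hF.div hL).congr fun z hz ↦ divLinearAt_of_ne fun h ↦ hL.ne_zero hz (by simp [h])

end divLinearAt

theorem HasArgVariation.abs_add_sub_le (Z : Finset E) (hF : ContinuousOn F (convexHull ℝ {A, B, C}))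
    (hZ : ∀ z ∈ convexHull ℝ {A, B, C}, F z = 0 → z ∈ Z) (hreg : ∀ p ∈ Z, HasRegularZeroAt F p)
    (hAB : HasArgVariation F A B a) (hBC : HasArgVariation F B C b)
    (hAC : HasArgVariation F A C c) : |a + b - c| ≤ 2 * Real.pi * Z.card := by
  classical
  induction Z using Finset.induction_on generalizing F a b c with
  | empty =>
    simp [hAB.add_eq_of_ne_zero hF (fun z hz h0 ↦ Finset.notMem_empty z (hZ z hz h0)) hBC hAC]
  | insert p Z hp ih =>
    have hp0 := (hreg p (Finset.mem_insert_self p Z)).eq_zero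
    obtain ⟨L, hL⟩ := hreg p (Finset.mem_insert_self p Z)
    let g : E →ᴬ[ℝ] ℂ := (L : E →L[ℝ] ℂ).toContinuousAffineMap.comp
      (ContinuousAffineMap.id ℝ E - ContinuousAffineMap.const ℝ E p)
    have hg {x y : E} {v : ℝ} (h : HasArgVariation F x y v) : 0 ∉ g '' segment ℝ x y := by
      rintro ⟨z, hz, hz0⟩
      have hzp : z = p := sub_eq_zero.1 (L.map_eq_zero_iff.1 hz0)
      exact h.ne_zero hz (hzp ▸ hp0)
    obtain ⟨a', b', c', hAB', hBC', hAC', hle⟩ :=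
      exists_hasArgVariation_triangle_affine g (hg hAB) (hg hBC) (hg hAC)
    have hrest : |(a - a') + (b - b') - (c - c')| ≤ 2 * Real.pi * Z.card := by
      refine ih (continuousOn_divLinearAt hF hL) (fun z hz h0 ↦ ?_) (fun q hq ↦ ?_)
        (hAB.divLinearAt hAB') (hBC.divLinearAt hBC') (hAC.divLinearAt hAC')
      · obtain ⟨hzp, hz0⟩ := divLinearAt_eq_zero_iff.1 h0
        exact Finset.mem_of_mem_insert_of_ne (hZ z hz hz0) hzp
      · exact (hreg q (Finset.mem_insert_of_mem hq)).divLinearAt (ne_of_mem_of_not_mem hq hp)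
    calc |a + b - c| = |((a - a') + (b - b') - (c - c')) + (a' + b' - c')| := by ring_nf
      _ ≤ |(a - a') + (b - b') - (c - c')| + |a' + b' - c'| := abs_add_le ..
      _ ≤ 2 * Real.pi * Z.card + 2 * Real.pi := add_le_add hrest hle
      _ = 2 * Real.pi * (insert p Z).card := by
        rw [Finset.card_insert_of_notMem hp]
        push_cast
        ring

end ArgumentPrinciple

section Secant

section Field

variable {𝕜 V : Type*} [NontriviallyNormedField 𝕜] [NormedAddCommGroup V] [NormedSpace 𝕜 V]
  {c : 𝕜 → V} {T : 𝕜}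

theorem dslope_comm (c : 𝕜 → V) (s t : 𝕜) : dslope c s t = dslope c t s := by
  rcases eq_or_ne s t with rfl | h
  · rfl
  · rw [dslope_of_ne c h, dslope_of_ne c h.symm, slope_comm]

theorem periodic_deriv (hc : Function.Periodic c T) : Function.Periodic (deriv c) T := fun t ↦ by
  rw [← deriv_comp_add_const, hc.funext]

theorem dslope_add_add (hc : Function.Periodic c T) (s t : 𝕜) :
    dslope c (s + T) (t + T) = dslope c s t := by
  rcases eq_or_ne t s with rfl | h
  · rw [dslope_same, dslope_same, periodic_deriv hc]
  · rw [dslope_of_ne c h, dslope_of_ne c (add_left_injective T |>.ne h), slope_def_module,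
      slope_def_module, hc, hc, add_sub_add_right_eq_sub]

end Field

variable {V : Type*} [NormedAddCommGroup V] [NormedSpace ℝ V] {c : ℝ → V} {T s t : ℝ}

theorem dslope_eq_integral [CompleteSpace V] (hc : ContDiff ℝ 1 c) (s t : ℝ) :
    dslope c s t = ∫ u in (0 : ℝ)..1, deriv c (s + u • (t - s)) := by
  rcases eq_or_ne t s with rfl | h
  · simp [dslope_same]
  · have hint := intervalIntegral.integral_unitInterval_deriv_eq_sub (z₀ := s) (z₁ := t - s)
      (hc.continuous_deriv_one.comp (by fun_prop)).continuousOn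
      fun u _ ↦ (hc.differentiable one_ne_zero _).hasDerivAt
    rw [dslope_of_ne c h, slope_def_module, inv_smul_eq_iff₀ (sub_ne_zero.2 h), hint,
      add_sub_cancel]

theorem continuous_dslope_uncurry [CompleteSpace V] (hc : ContDiff ℝ 1 c) :
    Continuous fun p : ℝ × ℝ ↦ dslope c p.1 p.2 := by
  simp only [dslope_eq_integral hc]
  refine intervalIntegral.continuous_parametric_intervalIntegral_of_continuous' ?_ 0 1
  exact hc.continuous_deriv_one.comp (by fun_prop)

/-- The secant function of a `T`-periodic curve `c` on the strip `s ≤ t ≤ s + T`. In its interior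
it is the secant `c t - c s` multiplied by `T / ((t - s) * (T - (t - s)))`, see
`secant_eq_smul_sub`; on its two edges it is `deriv c s` and `-deriv c s`. -/
def secant (c : ℝ → V) (T : ℝ) (p : ℝ × ℝ) : V :=
  dslope c p.1 p.2 - dslope c p.1 (p.2 - T)

theorem continuous_secant [CompleteSpace V] (hc : ContDiff ℝ 1 c) : Continuous (secant c T) :=
  (continuous_dslope_uncurry hc).sub
    ((continuous_dslope_uncurry hc).comp (g := fun p ↦ dslope c p.1 p.2)
      (f := fun p : ℝ × ℝ ↦ (p.1, p.2 - T)) (by fun_prop))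

theorem secant_eq_smul_sub (hc : Function.Periodic c T) (h : t ≠ s) (hT : t ≠ s + T) :
    secant c T (s, t) = (T / ((t - s) * (T - (t - s)))) • (c t - c s) := by
  have h0 : t - s ≠ 0 := sub_ne_zero.2 h
  have hT0 : t - T - s ≠ 0 := fun h ↦ hT (by linarith)
  have hT1 : T - (t - s) ≠ 0 := fun h ↦ hT (by linarith)
  rw [secant, dslope_of_ne c h, dslope_of_ne c (sub_ne_zero.1 hT0), slope_def_module,
    slope_def_module, hc.sub_eq, ← sub_smul]
  congr 1
  field_simp
  ring

theorem secant_self (hc : Function.Periodic c T) (hT : T ≠ 0) (s : ℝ) :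
    secant c T (s, s) = deriv c s := by
  rw [secant, dslope_same, dslope_of_ne c (by simpa using hT), slope_def_module, hc.sub_eq,
    sub_self, smul_zero, sub_zero]

theorem secant_add_period (hc : Function.Periodic c T) (s t : ℝ) :
    secant c T (t, s + T) = -secant c T (s, t) := by
  have h := dslope_add_add hc s (t - T)
  rw [sub_add_cancel] at h
  rw [secant, secant, neg_sub, add_sub_cancel_right, dslope_comm c t, dslope_comm c t, h]

theorem secant_eq_zero_iff (hc : Function.Periodic c T) (hst : s < t) (htT : t < s + T) :
    secant c T (s, t) = 0 ↔ c s = c t := by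
  have hT : 0 < T := by linarith
  rw [secant_eq_smul_sub hc hst.ne' htT.ne, smul_eq_zero_iff_right, sub_eq_zero, eq_comm]
  exact div_ne_zero hT.ne' (mul_ne_zero (by linarith) (by linarith))

end Secant

section PlaneCurve

open Filter

variable {c : ℝ → ℂ} {T a s t : ℝ} {v w : ℂ}

theorem cross_eq_zero_of_re_eq_zero (hv : v.re = 0) (hw : w.re = 0) : cross v w = 0 := by
  simp [cross, hv, hw]

theorem cross_comm (v w : ℂ) : cross v w = -cross w v := by
  unfold cross
  ring

theorem eq_zero_of_cross_ne_zero (h : cross v w ≠ 0) {x y : ℝ} (hxy : y • w - x • v = 0) :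
    (x, y) = 0 := by
  obtain ⟨hre, him⟩ := Complex.ext_iff.1 hxy
  simp only [Complex.sub_re, Complex.sub_im, Complex.smul_re, Complex.smul_im, smul_eq_mul,
    Complex.zero_re, Complex.zero_im] at hre him
  have hx : x * cross v w = 0 := by
    unfold cross
    linear_combination w.re * him - w.im * hre
  have hy : y * cross v w = 0 := by
    unfold cross
    linear_combination v.re * him - v.im * hre
  exact Prod.ext ((mul_eq_zero_iff_right h).1 hx) ((mul_eq_zero_iff_right h).1 hy)

theorem hasRegularZeroAt_sub (hs : HasDerivAt c v s) (ht : HasDerivAt c w t) (hst : c s = c t)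
    (h : cross v w ≠ 0) : HasRegularZeroAt (fun p : ℝ × ℝ ↦ c p.2 - c p.1) (s, t) := by
  let L : ℝ × ℝ →L[ℝ] ℂ :=
    (ContinuousLinearMap.toSpanSingleton ℝ w).comp (ContinuousLinearMap.snd ℝ ℝ ℝ) -
      (ContinuousLinearMap.toSpanSingleton ℝ v).comp (ContinuousLinearMap.fst ℝ ℝ ℝ)
  have hinj : Function.Injective L :=
    (injective_iff_map_eq_zero L).2 fun _ hp ↦ eq_zero_of_cross_ne_zero h hp
  have hL : HasFDerivAt (fun p : ℝ × ℝ ↦ c p.2 - c p.1) L (s, t) :=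
    (ht.hasFDerivAt.comp (s, t) hasFDerivAt_snd).sub (hs.hasFDerivAt.comp (s, t) hasFDerivAt_fst)
  let e := (LinearMap.linearEquivOfInjective (L : ℝ × ℝ →ₗ[ℝ] ℂ) hinj
    (by simp [Complex.finrank_real_complex])).toContinuousLinearEquiv
  exact HasRegularZeroAt.of_hasFDerivAt (L := e) hL (sub_eq_zero.2 hst.symm)

theorem hasRegularZeroAt_secant (hper : Function.Periodic c T) (hst : s < t) (htT : t < s + T)
    (hs : HasDerivAt c v s) (ht : HasDerivAt c w t) (heq : c s = c t) (h : cross v w ≠ 0) :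
    HasRegularZeroAt (secant c T) (s, t) := by
  have hd : (t - s) * (T - (t - s)) ≠ 0 := (mul_pos (by linarith) (by linarith)).ne'
  have hG : ContinuousAt
      (fun p : ℝ × ℝ ↦ ((T / ((p.2 - p.1) * (T - (p.2 - p.1))) : ℝ) : ℂ)) (s, t) :=
    Complex.continuous_ofReal.continuousAt.comp (ContinuousAt.div (by fun_prop) (by fun_prop) hd)
  refine ((hasRegularZeroAt_sub hs ht heq h).mul hG ?_).congr ?_
  · exact Complex.ofReal_ne_zero.2 (div_ne_zero (by linarith) hd)
  · have hne : ∀ᶠ p : ℝ × ℝ in 𝓝 (s, t), p.2 ≠ p.1 :=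
      (isOpen_ne_fun continuous_snd continuous_fst).mem_nhds hst.ne'
    have hneT : ∀ᶠ p : ℝ × ℝ in 𝓝 (s, t), p.2 ≠ p.1 + T :=
      (isOpen_ne_fun continuous_snd (continuous_fst.add continuous_const)).mem_nhds htT.ne
    filter_upwards [hne, hneT] with p hp hpT
    rw [secant_eq_smul_sub hper hp hpT, Complex.real_smul]

/-- The double points of a `T`-periodic curve, as pairs of distinct parameters `s < t` in the
period `[a, a + T)`. -/
def doublePairs {V : Type*} (c : ℝ → V) (T a : ℝ) : Set (ℝ × ℝ) :=
  {p | a ≤ p.1 ∧ p.1 < p.2 ∧ p.2 < a + T ∧ c p.1 = c p.2}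

theorem deriv_re_eq_zero_of_isMinOn (hc : DifferentiableAt ℝ c t)
    (hmin : IsMinOn (fun t ↦ (c t).re) univ t) : (deriv c t).re = 0 :=
  (hmin.isLocalMin univ_mem).hasDerivAt_eq_zero
    (Complex.reCLM.hasFDerivAt.comp_hasDerivAt t hc.hasDerivAt)

theorem forall_ne_of_isMinOn (hc : Differentiable ℝ c) (hmin : IsMinOn (fun t ↦ (c t).re) univ a)
    (htrans : ∀ p ∈ doublePairs c T a, cross (deriv c p.1) (deriv c p.2) ≠ 0)
    (ht : t ∈ Ioo a (a + T)) : c t ≠ c a := fun heq ↦ by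
  have hmin' : IsMinOn (fun t ↦ (c t).re) univ t := fun u hu ↦ by
    simpa only [heq] using hmin hu
  exact htrans (a, t) ⟨le_rfl, ht.1, ht.2, heq.symm⟩ (cross_eq_zero_of_re_eq_zero
    (deriv_re_eq_zero_of_isMinOn (hc a) hmin) (deriv_re_eq_zero_of_isMinOn (hc t) hmin'))

theorem secant_ne_zero_and_re_nonneg (hc : Differentiable ℝ c) (hper : Function.Periodic c T)
    (hT : 0 < T) (ha : deriv c a ≠ 0) (hmin : IsMinOn (fun t ↦ (c t).re) univ a)
    (hne : ∀ t ∈ Ioo a (a + T), c t ≠ c a) (ht : t ∈ Icc a (a + T)) :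
    secant c T (a, t) ≠ 0 ∧ 0 ≤ (secant c T (a, t)).re := by
  have hre := deriv_re_eq_zero_of_isMinOn (hc a) hmin
  rcases eq_endpoints_or_mem_Ioo_of_mem_Icc ht with rfl | rfl | ht
  · rw [secant_self hper hT.ne']
    exact ⟨ha, hre.ge⟩
  · rw [secant_add_period hper, secant_self hper hT.ne', Complex.neg_re, hre, neg_zero]
    exact ⟨neg_ne_zero.2 ha, le_rfl⟩
  · refine ⟨(secant_eq_zero_iff hper ht.1 ht.2).not.2 (hne t ht).symm, ?_⟩
    rw [secant_eq_smul_sub hper ht.1.ne' ht.2.ne, Complex.smul_re, Complex.sub_re]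
    have hd : 0 ≤ (t - a) * (T - (t - a)) :=
      mul_nonneg (sub_nonneg.2 ht.1.le) (by linarith [ht.2])
    exact mul_nonneg (div_nonneg hT.le hd) (sub_nonneg.2 (hmin (mem_univ t)))

theorem hasArgVariation_secant_diagonal (hper : Function.Periodic c T) (hT : T ≠ 0) {x y v : ℝ}
    (h : HasArgVariation (deriv c) x y v) : HasArgVariation (secant c T) (x, x) (y, y) v := by
  refine (h.comp_affineMap (ContinuousLinearMap.fst ℝ ℝ ℝ).toContinuousAffineMap
    (x := (x, x)) (y := (y, y))).congr ?_
  rintro _ ⟨α, β, -, -, -, rfl⟩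
  exact secant_self hper hT _

theorem hasArgVariation_secant_left {x y v : ℝ}
    (h : HasArgVariation (fun t ↦ secant c T (a, t)) x y v) :
    HasArgVariation (secant c T) (a, x) (a, y) v := by
  refine (h.comp_affineMap (ContinuousLinearMap.snd ℝ ℝ ℝ).toContinuousAffineMap
    (x := (a, x)) (y := (a, y))).congr ?_
  rintro _ ⟨α, β, -, -, hαβ, rfl⟩
  simp [← add_mul, hαβ]

theorem hasArgVariation_secant_top (hper : Function.Periodic c T) {x y v : ℝ}
    (h : HasArgVariation (fun t ↦ secant c T (a, t)) x y v) :
    HasArgVariation (secant c T) (x, a + T) (y, a + T) v := by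
  refine ((h.const_mul (neg_ne_zero.2 one_ne_zero)).comp_affineMap
    (ContinuousLinearMap.fst ℝ ℝ ℝ).toContinuousAffineMap (x := (x, a + T))
    (y := (y, a + T))).congr ?_
  rintro _ ⟨α, β, -, -, hαβ, rfl⟩
  simp [← add_mul, hαβ, secant_add_period hper]

theorem le_and_le_and_le_of_mem_triangle (hT : 0 ≤ T) {p : ℝ × ℝ}
    (hp : p ∈ convexHull ℝ {(a, a), (a, a + T), (a + T, a + T)}) :
    a ≤ p.1 ∧ p.1 ≤ p.2 ∧ p.2 ≤ a + T := by
  have hconv : Convex ℝ {p : ℝ × ℝ | (a ≤ p.1 ∧ p.1 ≤ p.2) ∧ p.2 ≤ a + T} :=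
    (convexOn_id (convex_Ici a)).convex_epigraph.inter
      (convex_halfSpace_le (LinearMap.snd ℝ ℝ ℝ).isLinear (a + T))
  refine and_assoc.1 (convexHull_min ?_ hconv hp)
  rintro _ (rfl | rfl | rfl) <;> simp [hT]

theorem mem_doublePairs_of_secant_eq_zero (hper : Function.Periodic c T) (hT : 0 < T)
    (hderiv : ∀ t, deriv c t ≠ 0) (hne : ∀ t ∈ Ioo a (a + T), c t ≠ c a) {p : ℝ × ℝ}
    (hp : p ∈ convexHull ℝ {(a, a), (a, a + T), (a + T, a + T)}) (h0 : secant c T p = 0) :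
    p ∈ doublePairs c T a := by
  obtain ⟨s, t⟩ := p
  obtain ⟨has, hst, hta⟩ : a ≤ s ∧ s ≤ t ∧ t ≤ a + T := le_and_le_and_le_of_mem_triangle hT.le hp
  have hst' : s < t := hst.lt_of_ne fun h ↦ by
    obtain rfl : s = t := h
    exact hderiv s (secant_self hper hT.ne' s ▸ h0)
  have htT : t < s + T := by
    refine (hta.trans (add_le_add_left has T)).lt_of_ne fun h ↦ hderiv s ?_
    rwa [h, secant_add_period hper, neg_eq_zero, secant_self hper hT.ne'] at h0
  have heq : c s = c t := (secant_eq_zero_iff hper hst' htT).1 h0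
  refine ⟨has, hst', hta.lt_of_ne fun h ↦ ?_, heq⟩
  have hs : s ∈ Ioo a (a + T) := ⟨by linarith, by linarith⟩
  exact hne s hs (by rw [heq, h, hper])

theorem abs_le_of_hasArgVariation_deriv (hc : ContDiff ℝ 1 c) (hper : Function.Periodic c T)
    (hT : 0 < T) (hderiv : ∀ t, deriv c t ≠ 0) (hmin : IsMinOn (fun t ↦ (c t).re) univ a)
    (htrans : ∀ p ∈ doublePairs c T a, cross (deriv c p.1) (deriv c p.2) ≠ 0)
    (hfin : (doublePairs c T a).Finite) {v : ℝ} (hv : HasArgVariation (deriv c) a (a + T) v) :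
    |v| ≤ 2 * Real.pi * (hfin.toFinset.card + 1) := by
  have hcd : Differentiable ℝ c := hc.differentiable one_ne_zero
  have hne := fun t ↦ forall_ne_of_isMinOn (t := t) hcd hmin htrans
  obtain ⟨u, hu, hside⟩ : ∃ u, |u| ≤ Real.pi ∧
      HasArgVariation (fun t ↦ secant c T (a, t)) a (a + T) u := by
    refine HasArgVariation.of_re_nonneg ((continuous_secant hc).comp (by fun_prop)).continuousOn
      fun t ht ↦ ?_
    rw [segment_eq_Icc (by linarith)] at ht
    exact secant_ne_zero_and_re_nonneg hcd hper hT (hderiv a) hmin hne ht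
  have hbound := HasArgVariation.abs_add_sub_le hfin.toFinset (continuous_secant hc).continuousOn
    (fun p hp h0 ↦ hfin.mem_toFinset.2
      (mem_doublePairs_of_secant_eq_zero hper hT hderiv hne hp h0))
    (fun p hp ↦ ?_) (hasArgVariation_secant_left hside) (hasArgVariation_secant_top hper hside)
    (hasArgVariation_secant_diagonal hper hT.ne' hv)
  · linarith [abs_sub_abs_le_abs_sub v (u + u), abs_sub_comm v (u + u), abs_add_le u u]
  · rw [hfin.mem_toFinset] at hp
    obtain ⟨ha, hst, hta, heq⟩ := hp
    exact hasRegularZeroAt_secant hper hst (hta.trans_le (by linarith)) (hcd _).hasDerivAt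
      (hcd _).hasDerivAt heq (htrans p ⟨ha, hst, hta, heq⟩)

theorem natAbs_le_encard_doublePairs_add_one (hc : ContDiff ℝ 1 c) (hper : Function.Periodic c T)
    (hT : 0 < T) (hderiv : ∀ t, deriv c t ≠ 0) (hmin : IsMinOn (fun t ↦ (c t).re) univ a)
    (htrans : ∀ p ∈ doublePairs c T a, cross (deriv c p.1) (deriv c p.2) ≠ 0) {n : ℤ}
    (hn : HasArgVariation (deriv c) a (a + T) (2 * Real.pi * n)) :
    (n.natAbs : ℕ∞) ≤ (doublePairs c T a).encard + 1 := by
  rcases (doublePairs c T a).finite_or_infinite with hfin | hinf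
  · have hle := abs_le_of_hasArgVariation_deriv hc hper hT hderiv hmin htrans hfin hn
    rw [abs_mul, abs_of_pos Real.two_pi_pos] at hle
    have habs : |(n : ℝ)| ≤ hfin.toFinset.card + 1 := le_of_mul_le_mul_left hle Real.two_pi_pos
    rw [hfin.encard_eq_coe_toFinset_card]
    rw [← Int.cast_abs, ← Nat.cast_natAbs] at habs
    exact_mod_cast habs
  · simp [hinf.encard_eq]

end PlaneCurve

theorem injOn_fract_Ico (a : ℝ) : InjOn Int.fract (Ico a (a + 1)) := fun x hx y hy h ↦ by
  obtain ⟨z, hz⟩ := Int.fract_eq_fract.1 h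
  have hz1 : (z : ℝ) < 1 := by linarith [hx.2, hy.1]
  have hz2 : (-1 : ℝ) < z := by linarith [hx.1, hy.2]
  obtain rfl : z = 0 := by
    have : z < 1 := by exact_mod_cast hz1
    have : -1 < z := by exact_mod_cast hz2
    lia
  exact sub_eq_zero.1 (by simpa using hz)

theorem apply_fract_of_periodic {α : Type*} {f : ℝ → α} (hf : Function.Periodic f 1) (t : ℝ) :
    f (Int.fract t) = f t := by
  simpa using hf.sub_zsmul_eq (x := t) ⌊t⌋

namespace ImmersedLoop

variable {γ : ImmersedLoop} {a : ℝ} {p : ℝ × ℝ}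

theorem contDiff_one (γ : ImmersedLoop) : ContDiff ℝ 1 γ.toFun :=
  γ.smooth.of_le (by exact_mod_cast le_top)

theorem exists_isMinOn_re (γ : ImmersedLoop) : ∃ a, IsMinOn (fun t ↦ (γ.toFun t).re) univ a := by
  have hcpt : IsCompact (range fun t ↦ (γ.toFun t).re) :=
    Function.Periodic.compact_of_continuous (γ.periodic.comp Complex.re) one_ne_zero
      (Complex.continuous_re.comp γ.contDiff_one.continuous)
  obtain ⟨_, ⟨a, rfl⟩, ha⟩ := hcpt.exists_isLeast (range_nonempty _)
  exact ⟨a, fun t _ ↦ ha (mem_range_self t)⟩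

theorem IndexIs.hasArgVariation {n : ℤ} (h : γ.IndexIs n) (a : ℝ) :
    HasArgVariation (deriv γ.toFun) a (a + 1) (2 * Real.pi * n) := by
  obtain ⟨θ, hθc, hθ, hn⟩ := h
  have harg (t : ℝ) : (θ t : Real.Angle) = (deriv γ.toFun t).arg := by
    rw [hθ t, Complex.arg_real_mul _ (norm_pos_iff.2 (γ.deriv_ne_zero t)), Complex.arg_exp_mul_I,
      Real.Angle.coe_toIocMod]
  have hshift : HasArgVariation (deriv γ.toFun) 0 a (θ (a + 1) - θ (0 + 1)) :=
    ⟨fun t ↦ θ (t + 1), by fun_prop, fun t _ ↦ ⟨γ.deriv_ne_zero t, by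
      rw [harg, periodic_deriv γ.periodic]⟩, rfl⟩
  have hθa := hshift.unique
    ⟨θ, hθc.continuousOn, fun t _ ↦ ⟨γ.deriv_ne_zero t, harg t⟩, rfl⟩
  rw [zero_add] at hθa
  exact ⟨θ, hθc.continuousOn, fun t _ ↦ ⟨γ.deriv_ne_zero t, harg t⟩, by linarith⟩

theorem fract_ne_fract_of_mem_doublePairs (hp : p ∈ doublePairs γ.toFun 1 a) :
    Int.fract p.1 ≠ Int.fract p.2 :=
  fun h ↦ hp.2.1.ne (injOn_fract_Ico a ⟨hp.1, hp.2.1.trans hp.2.2.1⟩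
    ⟨hp.1.trans hp.2.1.le, hp.2.2.1⟩ h)

theorem selfIntersection_of_mem_doublePairs (hp : p ∈ doublePairs γ.toFun 1 a) :
    γ.SelfIntersection (γ.toFun p.1) :=
  ⟨Int.fract p.1, Int.fract p.2, ⟨Int.fract_nonneg _, Int.fract_lt_one _⟩,
    ⟨Int.fract_nonneg _, Int.fract_lt_one _⟩, fract_ne_fract_of_mem_doublePairs hp,
    apply_fract_of_periodic γ.periodic _, by
      rw [apply_fract_of_periodic γ.periodic, hp.2.2.2]⟩

namespace Generic

theorem fract_eq_or_eq_and_cross_ne_zero (hgen : γ.Generic) (hp : p ∈ doublePairs γ.toFun 1 a) :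
    (∀ u, γ.toFun u = γ.toFun p.1 → Int.fract u = Int.fract p.1 ∨ Int.fract u = Int.fract p.2) ∧
      cross (deriv γ.toFun p.1) (deriv γ.toFun p.2) ≠ 0 := by
  obtain ⟨s, t, -, -, -, -, -, hall, hcross⟩ := hgen _ (selfIntersection_of_mem_doublePairs hp)
  have hall' (u : ℝ) (hu : γ.toFun u = γ.toFun p.1) : Int.fract u = s ∨ Int.fract u = t :=
    hall _ ⟨Int.fract_nonneg _, Int.fract_lt_one _⟩ (by rw [apply_fract_of_periodic γ.periodic, hu])
  have hne := fract_ne_fract_of_mem_doublePairs hp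
  have hderiv := periodic_deriv γ.periodic
  rw [← apply_fract_of_periodic hderiv p.1, ← apply_fract_of_periodic hderiv p.2]
  rcases hall' p.1 rfl with h1 | h1 <;> rcases hall' p.2 hp.2.2.2.symm with h2 | h2
  · exact absurd (h1.trans h2.symm) hne
  · rw [h1, h2]
    exact ⟨hall', hcross⟩
  · rw [h1, h2, cross_comm]
    exact ⟨fun u hu ↦ (hall' u hu).symm, neg_ne_zero.2 hcross⟩
  · exact absurd (h1.trans h2.symm) hne

theorem injOn_doublePairs (hgen : γ.Generic) :
    InjOn (fun p ↦ γ.toFun p.1) (doublePairs γ.toFun 1 a) := by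
  rintro ⟨s, t⟩ hp ⟨s', t'⟩ hq h
  have hmem (u : ℝ) (hau : a ≤ u) (hua : u < a + 1) (hu : γ.toFun u = γ.toFun s) :
      u = s ∨ u = t :=
    ((hgen.fract_eq_or_eq_and_cross_ne_zero hp).1 u hu).imp
      (injOn_fract_Ico a ⟨hau, hua⟩ ⟨hp.1, hp.2.1.trans hp.2.2.1⟩)
      (injOn_fract_Ico a ⟨hau, hua⟩ ⟨hp.1.trans hp.2.1.le, hp.2.2.1⟩)
  obtain ⟨has, hst, -, -⟩ := hp
  obtain ⟨has', hst', hta', heq'⟩ := hq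
  rcases hmem s' has' (hst'.trans hta') h.symm with rfl | rfl <;>
    rcases hmem t' (has'.trans hst'.le) hta' (heq'.symm.trans h.symm) with rfl | rfl
  · exact absurd hst' (lt_irrefl _)
  · rfl
  · exact absurd hst' hst.asymm
  · exact absurd hst' (lt_irrefl _)

theorem encard_doublePairs_le (hgen : γ.Generic) (a : ℝ) :
    (doublePairs γ.toFun 1 a).encard ≤ {q | γ.SelfIntersection q}.encard :=
  encard_le_encard_of_injOn (fun _ ↦ selfIntersection_of_mem_doublePairs) hgen.injOn_doublePairs

end Generic

end ImmersedLoop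

theorem self_intersections_lower_bound_of_index_general (γ : ImmersedLoop) (hgen : γ.Generic)
    {n : ℤ} (hind : γ.IndexIs n) :
    (n.natAbs : ℕ∞) ≤ {q : ℂ | γ.SelfIntersection q}.encard + 1 := by
  obtain ⟨a, hmin⟩ := γ.exists_isMinOn_re
  calc (n.natAbs : ℕ∞) ≤ (doublePairs γ.toFun 1 a).encard + 1 :=
        natAbs_le_encard_doublePairs_add_one γ.contDiff_one γ.periodic one_pos γ.deriv_ne_zero hmin
          (fun _ hp ↦ (hgen.fract_eq_or_eq_and_cross_ne_zero hp).2) (hind.hasArgVariation a)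
    _ ≤ {q : ℂ | γ.SelfIntersection q}.encard + 1 := by
        gcongr
        exact hgen.encard_doublePairs_le a

/-- Let `C = γ` be an oriented closed immersed curve in the
plane with only transverse double-point self-intersections and with index
`1 - 2g` for some `g ≥ 1`.  Then the total number of self-intersections of `C`
is at least `2g - 2`. -/
theorem self_intersections_lower_bound_of_index (γ : ImmersedLoop)
    (hgen : γ.Generic) (g : ℕ) (hg : 1 ≤ g)
    (hind : γ.IndexIs (1 - 2 * (g : ℤ))) :
    ((2 * g - 2 : ℕ) : ℕ∞) ≤ {q : ℂ | γ.SelfIntersection q}.encard := by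
  have h := self_intersections_lower_bound_of_index_general γ hgen hind
  rw [show (1 - 2 * (g : ℤ)).natAbs = 2 * g - 2 + 1 by lia, Nat.cast_add, Nat.cast_one] at h
  exact (ENat.add_le_add_iff_right ENat.one_ne_top).1 h
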